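/- For all constants Γ ≥ γ > 0 there is a constant C' > 0 (depending only on γ and Γ) such that for all integers m, d ≥ 2 with γ·d ≤ m ≤ Γ·d, a jittered sampling point set P of N = m^d points in [0,1)^d satisfies E[D*(P)] ≥ C' · √(d·N). -/

import Mathlib

open MeasureTheory ProbabilityTheory Real

noncomputable section

/-- The axis-aligned cube `∏_i [x_i/m, x_i/m + 1/m)` of the `m`-grid partition of `[0,1)^d`. -/
def jitterCube (m d : ℕ) (x : Fin d → Fin m) : Set (Fin d → ℝ) :=
  Set.univ.pi fun i => Set.Ico ((x i : ℝ) / m) ((x i : ℝ) / m + 1 / m)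

/-- The distribution of a jittered sampling point configuration: independently, one point
uniformly distributed in each of the `m^d` cubes. -/
def jitterMeasure (m d : ℕ) : Measure ((Fin d → Fin m) → (Fin d → ℝ)) :=
  Measure.pi fun x => ((m : ENNReal) ^ d) • volume.restrict (jitterCube m d x)

open scoped Classical in
/-- Signed (non-normalized) discrepancy `|P ∩ A| - N·λ(A)` with `N = m^d` of a point
configuration `P`. -/
def jdisc (m d : ℕ) (P : (Fin d → Fin m) → (Fin d → ℝ)) (A : Set (Fin d → ℝ)) : ℝ :=
  ((Finset.univ.filter fun x => P x ∈ A).card : ℝ) - (m : ℝ) ^ d * (volume A).toReal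

/-- The anchored box `[0,y) = ∏_i [0, y_i)`. -/
def anchoredBox (d : ℕ) (y : Fin d → ℝ) : Set (Fin d → ℝ) :=
  Set.univ.pi fun i => Set.Ico 0 (y i)

/-- The (non-normalized) star discrepancy `D*(P) = sup_{y ∈ [0,1)^d} |disc([0,y))|`. -/
def starDisc (m d : ℕ) (P : (Fin d → Fin m) → (Fin d → ℝ)) : ℝ :=
  ⨆ y : {y : Fin d → ℝ // ∀ i, y i ∈ Set.Ico (0 : ℝ) 1}, |jdisc m d P (anchoredBox d y.1)|

/-- The expected star discrepancy of a jittered sampling point set of `m^d` points. -/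
def expStarDisc (m d : ℕ) : ℝ :=
  ∫ P, starDisc m d P ∂(jitterMeasure m d)

lemma js_indep_zero {ι E : Type*} [Fintype ι] [DecidableEq ι] [MeasurableSpace E]
    (μ : ι → Measure E) [∀ i, IsProbabilityMeasure (μ i)] (x : ι) (F : (ι → E) → ℝ)
    (hF : Measurable F) (hinv : ∀ P Q : ι → E, (∀ i, i ≠ x → P i = Q i) → F P = F Q)
    (g : E → ℝ) (hg : Measurable g) (h0 : ∫ p, g p ∂(μ x) = 0) :
    ∫ P, F P * g (P x) ∂(Measure.pi μ) = 0 := by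
  have hne : Nonempty E := (μ x).nonempty_of_neZero
  obtain ⟨e⟩ := hne
  have hind : iIndepFun (fun i (P : ι → E) => P i) (Measure.pi μ) :=
    iIndepFun_pi (X := fun _ p => p) (fun i => aemeasurable_id)
  have h2 := hind.indepFun_finset {x}ᶜ {x} (by simp [disjoint_compl_left])
    (fun i => measurable_pi_apply i)
  let ext : ((({x}ᶜ : Finset ι)) → E) → (ι → E) :=
    fun r i => if h : i ∈ ({x}ᶜ : Finset ι) then r ⟨i, h⟩ else e
  have hext : Measurable ext := by
    refine measurable_pi_lambda _ fun i => ?_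
    by_cases h : i ∈ ({x}ᶜ : Finset ι)
    · simp only [ext, h, dite_true]; exact measurable_pi_apply _
    · simp only [ext, h, dite_false]; exact measurable_const
  have hψ : Measurable (fun r : ({x} : Finset ι) → E => g (r ⟨x, by simp⟩)) := by
    fun_prop
  have h3 := h2.comp (φ := fun r => F (ext r)) (ψ := fun r => g (r ⟨x, by simp⟩))
    (hF.comp hext) hψ
  have h4 : ((fun r => F (ext r)) ∘ fun (a : ι → E) (i : ({x}ᶜ : Finset ι)) => a i) = F := by
    funext P
    apply hinv
    intro i hi
    simp [ext, hi]
  rw [h4] at h3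
  have h5 := h3.integral_fun_mul_eq_mul_integral hF.aestronglyMeasurable
    (hg.comp (measurable_pi_apply x)).aestronglyMeasurable
  simp only [Function.comp_def] at h5
  rw [h5, integral_comp_eval (μ := μ) (i := x) (f := g) hg.aestronglyMeasurable, h0, mul_zero]

def jsc0 : ℝ := (1 - Real.exp (-(2 / π ^ 2))) / 2

lemma jsc0_pos : 0 < jsc0 := by
  have : Real.exp (-(2 / π ^ 2)) < 1 := by
    rw [Real.exp_lt_one_iff]
    have := Real.pi_pos
    have : 0 < 2 / π ^ 2 := by positivity
    linarith
  unfold jsc0; linarith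

open scoped Classical in
def jsv {E : Type*} (A : Set E) (p : E) : ℝ := if p ∈ A then 1 / 2 else -(1 / 2)

lemma jsv_meas {E : Type*} [MeasurableSpace E] {A : Set E} (hA : MeasurableSet A) :
    Measurable (jsv A) := by
  unfold jsv
  exact Measurable.ite hA measurable_const measurable_const

lemma jsv_abs {E : Type*} (A : Set E) (p : E) : |jsv A p| ≤ 1 / 2 := by
  unfold jsv; split_ifs <;> norm_num [abs_of_nonneg, abs_of_neg]

lemma jsv_comp_integral {E F : Type*} [MeasurableSpace E] [NormedAddCommGroup F] [NormedSpace ℝ F]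
    [CompleteSpace F]
    (μ : Measure E) [IsProbabilityMeasure μ]
    (A : Set E) (hA : MeasurableSet A) (h : μ.real A = 1 / 2) (f : ℝ → F) :
    ∫ p, f (jsv A p) ∂μ = (1 / 2 : ℝ) • f (1 / 2) + (1 / 2 : ℝ) • f (-(1 / 2)) := by
  have h1 : (fun p => f (jsv A p)) =
      fun p => A.indicator (fun _ => f (1 / 2)) p + Aᶜ.indicator (fun _ => f (-(1 / 2))) p := by
    funext p
    by_cases hp : p ∈ A <;> simp [jsv, hp]
  have hc : μ.real Aᶜ = 1 / 2 := by
    rw [measureReal_compl hA, h]; simp; norm_num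
  rw [h1, integral_add, integral_indicator_const _ hA, integral_indicator_const _ hA.compl, h, hc]
  · exact (integrable_const _).indicator hA
  · exact (integrable_const _).indicator hA.compl

lemma js_integrable {Ω : Type*} [MeasurableSpace Ω] (μ : Measure Ω) [IsProbabilityMeasure μ]
    (f : Ω → ℝ) (hf : Measurable f) (C : ℝ) (h : ∀ ω, |f ω| ≤ C) : Integrable f μ :=
  Integrable.of_bound hf.aestronglyMeasurable C (Filter.Eventually.of_forall h)

lemma js_khin {ι E : Type*} [Fintype ι] [DecidableEq ι] [MeasurableSpace E]
    (μ : ι → Measure E) [∀ i, IsProbabilityMeasure (μ i)] (T : Finset ι) (A : Set E)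
    (hA : MeasurableSet A) (h : ∀ x ∈ T, (μ x).real A = 1 / 2) :
    jsc0 * √(T.card : ℝ) ≤ ∫ P, |∑ x ∈ T, jsv A (P x)| ∂(Measure.pi μ) := by
  rcases Nat.eq_zero_or_pos T.card with h0 | hpos
  · rw [h0]; simp only [Nat.cast_zero, Real.sqrt_zero, mul_zero]
    exact integral_nonneg fun _ => abs_nonneg _
  set n : ℝ := (T.card : ℝ) with hn
  have hn1 : 1 ≤ n := by rw [hn]; exact_mod_cast hpos
  have hs1 : 1 ≤ √n := by rw [Real.one_le_sqrt]; exact hn1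
  set t : ℝ := 2 / √n with ht
  have htpos : 0 < t := by positivity
  have hXm : Measurable fun P : ι → E => ∑ x ∈ T, jsv A (P x) :=
    Finset.measurable_sum _ fun x _ => (jsv_meas hA).comp (measurable_pi_apply x)
  have hXb : ∀ P : ι → E, |∑ x ∈ T, jsv A (P x)| ≤ n := fun P => by
    refine (Finset.abs_sum_le_sum_abs _ _).trans ?_
    refine (Finset.sum_le_card_nsmul _ _ 1 fun x _ => (jsv_abs A _).trans (by norm_num)).trans ?_
    simp [hn]
  -- char function
  have hcf : ∫ P : ι → E, Complex.exp (((t * ∑ x ∈ T, jsv A (P x) : ℝ) : ℂ) * Complex.I)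
      ∂(Measure.pi μ) = ((Real.cos (1 / √n) ^ T.card : ℝ) : ℂ) := by
    have e1 : ∀ P : ι → E, Complex.exp (((t * ∑ x ∈ T, jsv A (P x) : ℝ) : ℂ) * Complex.I) =
        ∏ x, (if x ∈ T then Complex.exp (((t * jsv A (P x) : ℝ) : ℂ) * Complex.I) else 1) := by
      intro P
      rw [Finset.prod_ite_mem, Finset.univ_inter, ← Complex.exp_sum]
      congr 1
      push_cast
      rw [Finset.mul_sum, Finset.sum_mul]
    simp_rw [e1]
    rw [integral_fintype_prod_eq_prod (μ := μ) (f := fun x p =>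
      (if x ∈ T then Complex.exp (((t * jsv A p : ℝ) : ℂ) * Complex.I) else 1))]
    have e2 : ∀ x, ∫ p, (if x ∈ T then Complex.exp (((t * jsv A p : ℝ) : ℂ) * Complex.I) else 1)
        ∂(μ x) = if x ∈ T then ((Real.cos (1 / √n) : ℝ) : ℂ) else 1 := by
      intro x
      split_ifs with hx
      · rw [jsv_comp_integral (μ x) A hA (h x hx)
          (fun r => Complex.exp (((t * r : ℝ) : ℂ) * Complex.I))]
        rw [Complex.ofReal_cos, Complex.cos]
        have a1 : t * (1 / 2) = 1 / √n := by rw [ht]; ring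
        have a2 : t * (-(1 / 2)) = -(1 / √n) := by rw [ht]; ring
        rw [a1, a2]
        simp only [Complex.real_smul]
        push_cast
        ring_nf
      · simp
    simp_rw [e2]
    rw [Finset.prod_ite_mem, Finset.univ_inter, Finset.prod_const]
    push_cast; rfl
  have hcos : ∫ P : ι → E, Real.cos (t * ∑ x ∈ T, jsv A (P x)) ∂(Measure.pi μ)
      = Real.cos (1 / √n) ^ T.card := by
    have hi : Integrable (fun P : ι → E =>
        Complex.exp (((t * ∑ x ∈ T, jsv A (P x) : ℝ) : ℂ) * Complex.I)) (Measure.pi μ) := by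
      refine Integrable.of_bound (C := 1) ?_ (Filter.Eventually.of_forall fun P => ?_)
      · refine Measurable.aestronglyMeasurable ?_
        fun_prop
      · rw [Complex.norm_exp_ofReal_mul_I]
    have := integral_re (𝕜 := ℂ) hi
    rw [hcf] at this
    simpa only [RCLike.re_eq_complex_re, Complex.exp_ofReal_mul_I_re, Complex.ofReal_re] using this
  have hpow : Real.cos (1 / √n) ^ T.card ≤ Real.exp (-(2 / π ^ 2)) := by
    have b0 : 0 ≤ 1 / √n := by positivity
    have b1 : 1 / √n ≤ 1 := by rw [div_le_one (by positivity)]; exact hs1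
    have b2 : 0 ≤ Real.cos (1 / √n) := by
      apply Real.cos_nonneg_of_mem_Icc
      constructor <;> linarith [Real.pi_gt_three]
    have b3 : Real.cos (1 / √n) ≤ 1 - 2 / π ^ 2 * (1 / √n) ^ 2 := by
      apply Real.cos_le_one_sub_mul_cos_sq
      rw [abs_of_nonneg b0]; linarith [Real.pi_gt_three]
    have b4 : Real.cos (1 / √n) ≤ Real.exp (-(2 / π ^ 2 * (1 / √n) ^ 2)) := by
      refine b3.trans ?_
      have := Real.add_one_le_exp (-(2 / π ^ 2 * (1 / √n) ^ 2))
      linarith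
    refine (pow_le_pow_left₀ b2 b4 _).trans (le_of_eq ?_)
    rw [← Real.exp_nat_mul, ← hn]
    congr 1
    rw [div_pow, Real.sq_sqrt (by linarith)]
    field_simp
  have hle : ∀ P : ι → E, (1 - Real.cos (t * ∑ x ∈ T, jsv A (P x))) ≤
      t * |∑ x ∈ T, jsv A (P x)| := fun P => by
    have := abs_cos_sub_cos_le 0 (t * ∑ x ∈ T, jsv A (P x))
    rw [Real.cos_zero, zero_sub, abs_neg, abs_mul, abs_of_pos htpos] at this
    exact (le_abs_self _).trans this
  have hic : Integrable (fun P : ι → E => Real.cos (t * ∑ x ∈ T, jsv A (P x))) (Measure.pi μ) :=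
    js_integrable _ _ (by fun_prop) 1 fun _ => Real.abs_cos_le_one _
  have hia : Integrable (fun P : ι → E => |∑ x ∈ T, jsv A (P x)|) (Measure.pi μ) :=
    js_integrable _ _ (by fun_prop) n fun P => by rw [abs_abs]; exact hXb P
  have hfin := integral_mono ((integrable_const (1 : ℝ)).sub hic) (hia.const_mul t) hle
  simp only [Pi.sub_apply] at hfin
  rw [integral_sub (integrable_const _) hic, integral_const_mul, hcos] at hfin
  simp only [integral_const, probReal_univ, smul_eq_mul, one_mul] at hfin
  set I := ∫ P : ι → E, |∑ x ∈ T, jsv A (P x)| ∂(Measure.pi μ)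
  have : 1 - Real.exp (-(2 / π ^ 2)) ≤ 2 / √n * I := by linarith
  rw [div_mul_eq_mul_div, le_div_iff₀ (by positivity)] at this
  unfold jsc0
  linarith

def jsk (m d : ℕ) (x : Fin d → Fin m) : Measure (Fin d → ℝ) :=
  ((m : ENNReal) ^ d) • volume.restrict (jitterCube m d x)

lemma js_cube_meas (m d : ℕ) (x : Fin d → Fin m) : MeasurableSet (jitterCube m d x) :=
  MeasurableSet.univ_pi fun _ => measurableSet_Ico

lemma js_box_meas (d : ℕ) (y : Fin d → ℝ) : MeasurableSet (anchoredBox d y) :=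
  MeasurableSet.univ_pi fun _ => measurableSet_Ico

lemma jsk_apply (m d : ℕ) (x : Fin d → Fin m) (A : Set (Fin d → ℝ)) :
    jsk m d x A = (m : ENNReal) ^ d * volume (A ∩ jitterCube m d x) := by
  rw [jsk, Measure.smul_apply, Measure.restrict_apply' (js_cube_meas m d x), smul_eq_mul]

lemma jsk_real (m d : ℕ) (x : Fin d → Fin m) (A : Set (Fin d → ℝ)) :
    (jsk m d x).real A = (m : ℝ) ^ d * volume.real (A ∩ jitterCube m d x) := by
  rw [measureReal_def, jsk_apply]
  simp [measureReal_def]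

lemma jsk_prob (m d : ℕ) (hm : 2 ≤ m) (x : Fin d → Fin m) : IsProbabilityMeasure (jsk m d x) := by
  constructor
  rw [jsk_apply, Set.univ_inter, jitterCube, Real.volume_pi_Ico]
  have hm0 : (0 : ℝ) < m := by exact_mod_cast (by omega : 0 < m)
  simp only [add_sub_cancel_left, Finset.prod_const, Finset.card_univ, Fintype.card_fin]
  rw [← mul_pow, one_div, ENNReal.ofReal_inv_of_pos hm0, ENNReal.ofReal_natCast,
    ENNReal.mul_inv_cancel, one_pow]
  · simp; omega
  · simp

lemma js_mem_cube {m d : ℕ} (hm : 2 ≤ m) (x : Fin d → Fin m) (p : Fin d → ℝ) :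
    p ∈ jitterCube m d x ↔ ∀ i, ((x i : ℕ) : ℝ) ≤ m * p i ∧ m * p i < ((x i : ℕ) : ℝ) + 1 := by
  have hm0 : (0 : ℝ) < m := by exact_mod_cast (by omega : 0 < m)
  simp only [jitterCube, Set.mem_univ_pi, Set.mem_Ico]
  refine forall_congr' fun i => ?_
  rw [div_le_iff₀ hm0, ← add_div, lt_div_iff₀ hm0, mul_comm]

lemma js_cube_unique {m d : ℕ} (hm : 2 ≤ m) {x y : Fin d → Fin m} {p : Fin d → ℝ}
    (hx : p ∈ jitterCube m d x) (hy : p ∈ jitterCube m d y) : x = y := by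
  rw [js_mem_cube hm] at hx hy
  funext i
  have h1 : ((x i : ℕ) : ℝ) < ((y i : ℕ) : ℝ) + 1 := (hx i).1.trans_lt (hy i).2
  have h2 : ((y i : ℕ) : ℝ) < ((x i : ℕ) : ℝ) + 1 := (hy i).1.trans_lt (hx i).2
  have h1' : (x i : ℕ) < (y i : ℕ) + 1 := by exact_mod_cast h1
  have h2' : (y i : ℕ) < (x i : ℕ) + 1 := by exact_mod_cast h2
  ext; omega

lemma js_cube_cover {m d : ℕ} (hm : 2 ≤ m) (p : Fin d → ℝ) (hp : ∀ i, p i ∈ Set.Ico (0 : ℝ) 1) :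
    ∃ x, p ∈ jitterCube m d x := by
  have hm0 : (0 : ℝ) < m := by exact_mod_cast (by omega : 0 < m)
  have h0 : ∀ i, 0 ≤ m * p i := fun i => mul_nonneg hm0.le (hp i).1
  refine ⟨fun i => ⟨⌊m * p i⌋₊, ?_⟩, ?_⟩
  · rw [Nat.floor_lt (h0 i)]
    nlinarith [(hp i).2]
  · rw [js_mem_cube hm]
    exact fun i => ⟨Nat.floor_le (h0 i), Nat.lt_floor_add_one _⟩

lemma js_sum_real {m d : ℕ} (hm : 2 ≤ m) (A : Set (Fin d → ℝ)) (hA : MeasurableSet A)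
    (hsub : ∀ p ∈ A, ∀ i, p i ∈ Set.Ico (0 : ℝ) 1) :
    ∑ x, (jsk m d x).real A = (m : ℝ) ^ d * (volume A).toReal := by
  simp_rw [jsk_real]
  rw [← Finset.mul_sum]
  congr 1
  have h1 : A = ⋃ x : Fin d → Fin m, A ∩ jitterCube m d x := by
    ext p
    simp only [Set.mem_iUnion, Set.mem_inter_iff, exists_and_left]
    exact ⟨fun h => ⟨h, js_cube_cover hm p (hsub p h)⟩, fun h => h.1⟩
  have h2 : volume A = ∑ x : Fin d → Fin m, volume (A ∩ jitterCube m d x) := by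
    conv_lhs => rw [h1]
    rw [measure_iUnion, tsum_fintype]
    · intro x y hxy
      rw [Function.onFun, Set.disjoint_left]
      intro p hp hq
      exact hxy (js_cube_unique hm hp.2 hq.2)
    · exact fun x => hA.inter (js_cube_meas m d x)
  rw [h2, ENNReal.toReal_sum]
  · rfl
  · intro x _
    refine ((measure_mono Set.inter_subset_right).trans_lt ?_).ne
    rw [jitterCube, Real.volume_pi_Ico]
    exact ENNReal.prod_lt_top fun i _ => ENNReal.ofReal_lt_top

open scoped Classical in
def jsg (m d : ℕ) (A : Set (Fin d → ℝ)) (x : Fin d → Fin m) (p : Fin d → ℝ) : ℝ :=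
  (if p ∈ A then 1 else 0) - (jsk m d x).real A

lemma jsg_meas (m d : ℕ) (A : Set (Fin d → ℝ)) (hA : MeasurableSet A) (x : Fin d → Fin m) :
    Measurable (jsg m d A x) := by
  unfold jsg
  exact (Measurable.ite hA measurable_const measurable_const).sub measurable_const

lemma jsg_int {m d : ℕ} (hm : 2 ≤ m) (A : Set (Fin d → ℝ)) (hA : MeasurableSet A)
    (x : Fin d → Fin m) : ∫ p, jsg m d A x p ∂(jsk m d x) = 0 := by
  have := jsk_prob m d hm x
  have h1 : jsg m d A x = fun p => A.indicator (fun _ => (1 : ℝ)) p - (jsk m d x).real A := by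
    funext p
    by_cases hp : p ∈ A <;> simp [jsg, hp]
  rw [h1, integral_sub ((integrable_const _).indicator hA) (integrable_const _),
    integral_indicator_const _ hA]
  simp

lemma jsg_abs {m d : ℕ} (hm : 2 ≤ m) (A : Set (Fin d → ℝ)) (x : Fin d → Fin m)
    (p : Fin d → ℝ) : |jsg m d A x p| ≤ 1 := by
  have := jsk_prob m d hm x
  have h1 : (jsk m d x).real A ≤ 1 := measureReal_le_one
  have h2 : 0 ≤ (jsk m d x).real A := measureReal_nonneg
  unfold jsg
  rw [abs_le]
  split_ifs <;> constructor <;> linarith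

lemma js_disc_eq {m d : ℕ} (hm : 2 ≤ m) (A : Set (Fin d → ℝ)) (hA : MeasurableSet A)
    (hsub : ∀ p ∈ A, ∀ i, p i ∈ Set.Ico (0 : ℝ) 1) (P : (Fin d → Fin m) → (Fin d → ℝ)) :
    jdisc m d P A = ∑ x, jsg m d A x (P x) := by
  simp only [jdisc, jsg]
  rw [Finset.sum_sub_distrib, js_sum_real hm A hA hsub]
  simp

lemma js_box_sub {d : ℕ} {y : Fin d → ℝ} (hy : ∀ i, y i ∈ Set.Ico (0 : ℝ) 1) :
    ∀ p ∈ anchoredBox d y, ∀ i, p i ∈ Set.Ico (0 : ℝ) 1 := by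
  intro p hp i
  have := hp i (Set.mem_univ i)
  exact ⟨this.1, this.2.trans (hy i).2⟩

lemma js_disc_meas {m d : ℕ} (hm : 2 ≤ m) {y : Fin d → ℝ} (hy : ∀ i, y i ∈ Set.Ico (0 : ℝ) 1) :
    Measurable fun P : (Fin d → Fin m) → (Fin d → ℝ) => jdisc m d P (anchoredBox d y) := by
  simp_rw [fun P => js_disc_eq hm _ (js_box_meas d y) (js_box_sub hy) P]
  exact Finset.measurable_sum _ fun x _ =>
    (jsg_meas m d _ (js_box_meas d y) x).comp (measurable_pi_apply x)

lemma js_disc_abs {m d : ℕ} (hm : 2 ≤ m) {y : Fin d → ℝ} (hy : ∀ i, y i ∈ Set.Ico (0 : ℝ) 1)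
    (P : (Fin d → Fin m) → (Fin d → ℝ)) :
    |jdisc m d P (anchoredBox d y)| ≤ (m : ℝ) ^ d := by
  rw [js_disc_eq hm _ (js_box_meas d y) (js_box_sub hy)]
  refine (Finset.abs_sum_le_sum_abs _ _).trans ?_
  refine (Finset.sum_le_card_nsmul _ _ 1 fun x _ => jsg_abs hm _ _ _).trans ?_
  simp

lemma js_bdd {m d : ℕ} (hm : 2 ≤ m) (P : (Fin d → Fin m) → (Fin d → ℝ)) :
    BddAbove (Set.range fun y : {y : Fin d → ℝ // ∀ i, y i ∈ Set.Ico (0 : ℝ) 1} =>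
      |jdisc m d P (anchoredBox d y.1)|) := by
  refine ⟨(m : ℝ) ^ d, ?_⟩
  rintro _ ⟨y, rfl⟩
  exact js_disc_abs hm y.2 P

lemma js_le_star {m d : ℕ} (hm : 2 ≤ m) {y : Fin d → ℝ} (hy : ∀ i, y i ∈ Set.Ico (0 : ℝ) 1)
    (P : (Fin d → Fin m) → (Fin d → ℝ)) :
    |jdisc m d P (anchoredBox d y)| ≤ starDisc m d P :=
  le_ciSup (js_bdd hm P) ⟨y, hy⟩

lemma js_star_abs {m d : ℕ} (hm : 2 ≤ m) (P : (Fin d → Fin m) → (Fin d → ℝ)) :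
    |starDisc m d P| ≤ (m : ℝ) ^ d := by
  have : Nonempty {y : Fin d → ℝ // ∀ i, y i ∈ Set.Ico (0 : ℝ) 1} :=
    ⟨⟨fun _ => 0, fun _ => by simp⟩⟩
  have h0 : 0 ≤ starDisc m d P := Real.iSup_nonneg fun _ => abs_nonneg _
  rw [abs_of_nonneg h0]
  exact ciSup_le fun y => js_disc_abs hm y.2 P

lemma js_box_vol {d : ℕ} {y : Fin d → ℝ} (hy : ∀ i, 0 ≤ y i) :
    (volume (anchoredBox d y)).toReal = ∏ i, y i := by
  rw [anchoredBox, Real.volume_pi_Ico_toReal (fun i => hy i)]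
  simp

open Filter Topology in
lemma js_star_eq {m d : ℕ} (hm : 2 ≤ m) (P : (Fin d → Fin m) → (Fin d → ℝ)) :
    starDisc m d P = ⨆ q : {q : Fin d → ℚ // ∀ i, ((q i : ℝ)) ∈ Set.Ico (0 : ℝ) 1},
      |jdisc m d P (anchoredBox d fun i => (q.1 i : ℝ))| := by
  classical
  have : Nonempty {y : Fin d → ℝ // ∀ i, y i ∈ Set.Ico (0 : ℝ) 1} :=
    ⟨⟨fun _ => 0, fun _ => by simp⟩⟩
  have : Nonempty {q : Fin d → ℚ // ∀ i, ((q i : ℝ)) ∈ Set.Ico (0 : ℝ) 1} :=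
    ⟨⟨fun _ => 0, fun _ => by simp⟩⟩
  have hb : BddAbove (Set.range fun q : {q : Fin d → ℚ // ∀ i, ((q i : ℝ)) ∈ Set.Ico (0 : ℝ) 1} =>
      |jdisc m d P (anchoredBox d fun i => (q.1 i : ℝ))|) := by
    refine ⟨(m : ℝ) ^ d, ?_⟩
    rintro _ ⟨y, rfl⟩
    exact js_disc_abs hm y.2 P
  apply le_antisymm
  · refine ciSup_le fun y => ?_
    obtain ⟨y, hy⟩ := y
    let q : ℕ → Fin d → ℚ := fun n i => (⌊y i * n⌋₊ : ℚ) / n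
    have hq0 : ∀ n i, (0 : ℝ) ≤ q n i := fun n i => by
      simp only [q]; push_cast; positivity
    have hqy : ∀ n i, (q n i : ℝ) ≤ y i := fun n i => by
      simp only [q]; push_cast
      refine div_le_of_le_mul₀ (by positivity) (hy i).1 ?_
      exact Nat.floor_le (mul_nonneg (hy i).1 (by positivity))
    have hq : ∀ n i, (q n i : ℝ) ∈ Set.Ico (0 : ℝ) 1 := fun n i =>
      ⟨hq0 n i, (hqy n i).trans_lt (hy i).2⟩
    have hlim : ∀ i, Tendsto (fun n => (q n i : ℝ)) atTop (𝓝 (y i)) := fun i => by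
      have := (tendsto_nat_floor_mul_div_atTop (hy i).1).comp
        (tendsto_natCast_atTop_atTop (R := ℝ))
      refine this.congr fun n => ?_
      simp [q]
    have hmem : ∀ x, ∀ᶠ n in atTop, (P x ∈ anchoredBox d (fun i => (q n i : ℝ)) ↔
        P x ∈ anchoredBox d y) := by
      intro x
      by_cases hx : P x ∈ anchoredBox d y
      · have hx' : ∀ i, ∀ᶠ n in atTop, P x i < (q n i : ℝ) := fun i =>
          (hlim i).eventually_const_lt (hx i (Set.mem_univ i)).2
        filter_upwards [eventually_all.2 hx'] with n hn
        simp only [hx, iff_true]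
        exact fun i _ => ⟨(hx i (Set.mem_univ i)).1, hn i⟩
      · refine Eventually.of_forall fun n => ?_
        simp only [hx, iff_false]
        exact fun h => hx fun i _ => ⟨(h i (Set.mem_univ i)).1,
          (h i (Set.mem_univ i)).2.trans_le (hqy n i)⟩
    have htend : Tendsto (fun n => |jdisc m d P (anchoredBox d (fun i => (q n i : ℝ)))|) atTop
        (𝓝 |jdisc m d P (anchoredBox d y)|) := by
      refine Tendsto.abs ?_
      have hv : Tendsto (fun n => (m : ℝ) ^ d * ∏ i, (q n i : ℝ)) atTop
          (𝓝 ((m : ℝ) ^ d * ∏ i, y i)) :=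
        (tendsto_finsetProd _ fun i _ => hlim i).const_mul _
      unfold jdisc
      rw [js_box_vol fun i => (hy i).1]
      have hv2 := (tendsto_const_nhds (x := (((Finset.univ.filter
        fun x => P x ∈ anchoredBox d y).card : ℝ))) (f := atTop (α := ℕ))).sub hv
      refine hv2.congr' ?_
      filter_upwards [eventually_all.2 hmem] with n hn
      rw [js_box_vol fun i => hq0 n i]
      simp only [hn]
    exact le_of_tendsto' htend fun n => le_ciSup hb ⟨q n, hq n⟩
  · exact ciSup_le fun q => js_le_star hm q.2 P

lemma js_star_meas {m d : ℕ} (hm : 2 ≤ m) : Measurable (starDisc m d) := by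
  have : starDisc m d = fun P => ⨆ q : {q : Fin d → ℚ // ∀ i, ((q i : ℝ)) ∈ Set.Ico (0 : ℝ) 1},
      |jdisc m d P (anchoredBox d fun i => (q.1 i : ℝ))| := funext fun P => js_star_eq hm P
  rw [this]
  exact Measurable.iSup fun q => (js_disc_meas hm q.2).abs

def jsT (m d : ℕ) (i : Fin d) : Finset (Fin d → Fin m) :=
  Finset.univ.filter fun x => ∀ j, (x j : ℕ) + 1 = m ↔ j = i

lemma jsT_card {m d : ℕ} (hm : 2 ≤ m) (i : Fin d) : (jsT m d i).card = (m - 1) ^ (d - 1) := by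
  let l : Fin m := ⟨m - 1, by omega⟩
  have h : jsT m d i = Fintype.piFinset fun j => if j = i then {l} else {l}ᶜ := by
    ext x
    simp only [jsT, Finset.mem_filter, Finset.mem_univ, true_and, Fintype.mem_piFinset]
    refine forall_congr' fun j => ?_
    have hl : (x j : ℕ) + 1 = m ↔ x j = l := by
      rw [Fin.ext_iff]; simp only [l]; omega
    rw [hl]
    by_cases hj : j = i <;> simp [hj]
  rw [h, Fintype.card_piFinset]
  have : ∀ j, (if j = i then ({l} : Finset (Fin m)) else {l}ᶜ).card =
      if j = i then 1 else m - 1 := fun j => by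
    split_ifs
    · simp
    · simp [Finset.card_compl]
  simp_rw [this]
  rw [Finset.prod_ite]
  simp [Finset.filter_ne', Finset.card_erase_of_mem]

def jsy (m d : ℕ) (S : Finset (Fin d)) (i : Fin d) : ℝ :=
  if i ∈ S then 1 - 1 / (2 * m) else 1 - 1 / m

def jsH (m d : ℕ) (i : Fin d) : Set (Fin d → ℝ) := {p | p i < 1 - 1 / (2 * m)}

lemma jsH_meas (m d : ℕ) (i : Fin d) : MeasurableSet (jsH m d i) :=
  measurableSet_lt (measurable_pi_apply i) measurable_const

lemma js_inv {m : ℕ} (hm : 2 ≤ m) : (0 : ℝ) < 1 / m ∧ (1 : ℝ) / m ≤ 1 / 2 ∧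
    (1 : ℝ) / (2 * m) = 1 / m / 2 := by
  have hm0 : (2 : ℝ) ≤ m := by exact_mod_cast hm
  refine ⟨by positivity, ?_, by field_simp⟩
  rw [div_le_div_iff₀ (by linarith) (by norm_num)]; linarith

lemma jsy_mem {m d : ℕ} (hm : 2 ≤ m) (S : Finset (Fin d)) (i : Fin d) :
    jsy m d S i ∈ Set.Ico (0 : ℝ) 1 := by
  obtain ⟨h1, h2, h3⟩ := js_inv hm
  unfold jsy
  rw [h3]
  split_ifs <;> constructor <;> linarith

lemma js_mem_box {m d : ℕ} (hm : 2 ≤ m) (S : Finset (Fin d)) (i : Fin d) {x : Fin d → Fin m}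
    (hx : x ∈ jsT m d i) {p : Fin d → ℝ} (hp : p ∈ jitterCube m d x) :
    p ∈ anchoredBox d (jsy m d S) ↔ i ∈ S ∧ p ∈ jsH m d i := by
  have hm0 : (0 : ℝ) < m := by exact_mod_cast (by omega : 0 < m)
  obtain ⟨h1, h2, h3⟩ := js_inv hm
  simp only [jsT, Finset.mem_filter, Finset.mem_univ, true_and] at hx
  rw [js_mem_cube hm] at hp
  have hp0 : ∀ j, 0 ≤ p j := fun j => by
    have : 0 ≤ m * p j := le_trans (by positivity) (hp j).1
    exact nonneg_of_mul_nonneg_right this hm0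
  have hj : ∀ j, j ≠ i → p j < 1 - 1 / m := fun j hji => by
    have ha : (x j : ℕ) + 1 < m := by
      have := (x j).2
      have := (hx j).not.2 hji
      omega
    have hb : ((x j : ℕ) : ℝ) + 1 ≤ m - 1 := by
      have : (x j : ℕ) + 1 + 1 ≤ m := ha
      have : ((x j : ℕ) : ℝ) + 1 + 1 ≤ m := by exact_mod_cast this
      linarith
    have hc : m * p j < m * (1 - 1 / m) := by
      rw [mul_sub, mul_one_div_cancel hm0.ne', mul_one]
      linarith [(hp j).2]
    exact lt_of_mul_lt_mul_left hc hm0.le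
  have hi : 1 - 1 / m ≤ p i := by
    have ha : (x i : ℕ) + 1 = m := (hx i).2 rfl
    have hb : ((x i : ℕ) : ℝ) + 1 = m := by exact_mod_cast ha
    have hc : m * (1 - 1 / m) ≤ m * p i := by
      rw [mul_sub, mul_one_div_cancel hm0.ne', mul_one]
      linarith [(hp i).1]
    exact le_of_mul_le_mul_left hc hm0
  constructor
  · intro h
    have h' := (h i (Set.mem_univ i)).2
    unfold jsy at h'
    split_ifs at h' with hS
    · exact ⟨hS, h'⟩
    · linarith
  · rintro ⟨hS, hH⟩ j _
    refine ⟨hp0 j, ?_⟩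
    by_cases hji : j = i
    · subst hji
      unfold jsy
      rw [if_pos hS]
      exact hH
    · have := hj j hji
      unfold jsy
      rw [h3]
      split_ifs <;> linarith

lemma jsk_half {m d : ℕ} (hm : 2 ≤ m) (i : Fin d) {x : Fin d → Fin m} (hx : x ∈ jsT m d i) :
    (jsk m d x).real (jsH m d i) = 1 / 2 := by
  have hm0 : (0 : ℝ) < m := by exact_mod_cast (by omega : 0 < m)
  obtain ⟨h1, h2, h3⟩ := js_inv hm
  simp only [jsT, Finset.mem_filter, Finset.mem_univ, true_and] at hx
  have ha : (x i : ℕ) + 1 = m := (hx i).2 rfl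
  have hb : ((x i : ℕ) : ℝ) = m - 1 := by
    have : ((x i : ℕ) : ℝ) + 1 = m := by exact_mod_cast ha
    linarith
  have hxi : ((x i : ℕ) : ℝ) / m = 1 - 1 / m := by
    rw [hb, sub_div, div_self hm0.ne']
  have hset : jsH m d i ∩ jitterCube m d x = Set.univ.pi fun j =>
      Set.Ico ((x j : ℝ) / m) ((x j : ℝ) / m + if j = i then (1 : ℝ) / m / 2 else (1 : ℝ) / m) := by
    ext p
    simp only [jsH, jitterCube, Set.mem_inter_iff, Set.mem_ofPred_eq, Set.mem_univ_pi, Set.mem_Ico]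
    constructor
    · rintro ⟨hp, hq⟩ j
      refine ⟨(hq j).1, ?_⟩
      split_ifs with hji
      · subst hji
        rw [hxi]; rw [h3] at hp; linarith
      · exact (hq j).2
    · intro hq
      refine ⟨?_, fun j => ⟨(hq j).1, ?_⟩⟩
      · have := (hq i).2
        rw [if_pos rfl, hxi] at this
        rw [h3]; linarith
      · have := (hq j).2
        split_ifs at this <;> linarith
  rw [jsk_real, hset, measureReal_def, Real.volume_pi_Ico_toReal]
  · simp only [add_sub_cancel_left]
    have hprod : (∏ j : Fin d, if j = i then (1 : ℝ) / m / 2 else 1 / m) =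
        (∏ j : Fin d, (1 : ℝ) / m) * ∏ j : Fin d, if j = i then (1 / 2 : ℝ) else 1 := by
      rw [← Finset.prod_mul_distrib]
      refine Finset.prod_congr rfl fun j _ => ?_
      split_ifs <;> ring
    rw [hprod, Finset.prod_const, Finset.card_univ, Fintype.card_fin, Finset.prod_ite_eq',
      if_pos (Finset.mem_univ i), ← mul_assoc, ← mul_pow, mul_one_div_cancel hm0.ne']
    norm_num
  · intro j
    dsimp only
    split_ifs <;> linarith

lemma jsg_T {m d : ℕ} (hm : 2 ≤ m) (S : Finset (Fin d)) (i : Fin d) {x : Fin d → Fin m}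
    (hx : x ∈ jsT m d i) {p : Fin d → ℝ} (hp : p ∈ jitterCube m d x) :
    jsg m d (anchoredBox d (jsy m d S)) x p = if i ∈ S then jsv (jsH m d i) p else 0 := by
  have hk : (jsk m d x).real (anchoredBox d (jsy m d S)) = if i ∈ S then 1 / 2 else 0 := by
    split_ifs with hS
    · rw [← jsk_half hm i hx, jsk_real, jsk_real]
      congr 2
      ext q
      simp only [Set.mem_inter_iff]
      refine and_congr_left fun hq => ?_
      rw [js_mem_box hm S i hx hq]
      simp [hS]
    · rw [jsk_real]
      have : anchoredBox d (jsy m d S) ∩ jitterCube m d x = ∅ := by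
        ext q
        simp only [Set.mem_inter_iff, Set.mem_empty_iff_false, iff_false, not_and]
        intro h1 h2
        rw [js_mem_box hm S i hx h2] at h1
        exact hS h1.1
      rw [this]; simp
  unfold jsg
  rw [hk, js_mem_box hm S i hx hp]
  unfold jsv
  by_cases hS : i ∈ S <;> by_cases hH : p ∈ jsH m d i <;> simp [hS, hH]
  norm_num

def jsX (m d : ℕ) (i : Fin d) (P : (Fin d → Fin m) → (Fin d → ℝ)) : ℝ :=
  ∑ x ∈ jsT m d i, jsv (jsH m d i) (P x)

lemma jsX_meas (m d : ℕ) (i : Fin d) : Measurable (jsX m d i) :=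
  Finset.measurable_sum _ fun x _ => (jsv_meas (jsH_meas m d i)).comp (measurable_pi_apply x)

lemma jsX_abs (m d : ℕ) (i : Fin d) (P : (Fin d → Fin m) → (Fin d → ℝ)) :
    |jsX m d i P| ≤ (jsT m d i).card := by
  refine (Finset.abs_sum_le_sum_abs _ _).trans ?_
  refine (Finset.sum_le_card_nsmul _ _ 1 fun x _ => (jsv_abs _ _).trans (by norm_num)).trans ?_
  simp

open scoped Classical in
def jsS (m d : ℕ) (P : (Fin d → Fin m) → (Fin d → ℝ)) : Finset (Fin d) :=
  Finset.univ.filter fun i => 0 < jsX m d i P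

def jsU (m d : ℕ) : Finset (Fin d → Fin m) := Finset.univ.biUnion fun i => jsT m d i

open scoped Classical in
def jsw (m d : ℕ) (S : Finset (Fin d)) (P : (Fin d → Fin m) → (Fin d → ℝ)) : ℝ :=
  if jsS m d P = S then 1 else 0

lemma jsw_meas (m d : ℕ) (S : Finset (Fin d)) : Measurable (jsw m d S) := by
  classical
  unfold jsw
  refine Measurable.ite ?_ measurable_const measurable_const
  have : {P : (Fin d → Fin m) → (Fin d → ℝ) | jsS m d P = S} =
      ⋂ i, {P | 0 < jsX m d i P ↔ i ∈ S} := by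
    ext P
    simp [jsS, Finset.ext_iff]
  rw [this]
  refine MeasurableSet.iInter fun i => ?_
  have h := measurableSet_lt (measurable_const (a := (0 : ℝ))) (jsX_meas m d i)
  by_cases hi : i ∈ S
  · simpa [hi] using h
  · simp only [hi, iff_false]
    exact h.compl

lemma jsw_inv {m d : ℕ} (S : Finset (Fin d)) {x : Fin d → Fin m} (hx : x ∉ jsU m d)
    (P Q : (Fin d → Fin m) → (Fin d → ℝ)) (h : ∀ z, z ≠ x → P z = Q z) :
    jsw m d S P = jsw m d S Q := by
  have hX : ∀ i, jsX m d i P = jsX m d i Q := fun i => by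
    refine Finset.sum_congr rfl fun z hz => ?_
    rw [h z]
    rintro rfl
    exact hx (Finset.mem_biUnion.2 ⟨i, Finset.mem_univ i, hz⟩)
  have hS : jsS m d P = jsS m d Q := by
    ext i; simp [jsS, hX]
  rw [jsw, jsw, hS]

lemma js_pointwise {m d : ℕ} (hm : 2 ≤ m) (P : (Fin d → Fin m) → (Fin d → ℝ))
    (hP : ∀ x, P x ∈ jitterCube m d x) :
    (∑ i, (|jsX m d i P| + jsX m d i P) / 2) +
      ∑ x ∈ (jsU m d)ᶜ, ∑ S, jsw m d S P * jsg m d (anchoredBox d (jsy m d S)) x (P x) ≤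
      starDisc m d P := by
  classical
  set S := jsS m d P with hS
  have h1 := (le_abs_self _).trans (js_le_star hm (jsy_mem hm S) P)
  rw [js_disc_eq hm _ (js_box_meas d _) (js_box_sub (jsy_mem hm S)),
    ← Finset.sum_add_sum_compl (jsU m d)] at h1
  refine le_trans (le_of_eq ?_) h1
  congr 1
  · rw [jsU, Finset.sum_biUnion]
    · refine Finset.sum_congr rfl fun i _ => ?_
      rw [Finset.sum_congr rfl fun x hx => jsg_T hm S i hx (hP x)]
      have hi : i ∈ S ↔ 0 < jsX m d i P := by simp [hS, jsS]
      by_cases hpos : 0 < jsX m d i P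
      · simp only [hi.2 hpos, if_true]
        rw [abs_of_pos hpos, add_self_div_two]
        rfl
      · simp only [hi.not.2 hpos, if_false]
        rw [abs_of_nonpos (not_lt.1 hpos)]
        simp
    · intro i _ j _ hij
      rw [Function.onFun, Finset.disjoint_left]
      intro x hx hy
      simp only [jsT, Finset.mem_filter, Finset.mem_univ, true_and] at hx hy
      exact hij (((hy i).1 ((hx i).2 rfl)))
  · refine Finset.sum_congr rfl fun x _ => ?_
    simp [jsw, ← hS]

lemma js_exp {m d : ℕ} (hm : 2 ≤ m) :
    d * (jsc0 / 2 * √(((m - 1 : ℕ) : ℝ) ^ (d - 1))) ≤ expStarDisc m d := by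
  classical
  have hprob : ∀ x, IsProbabilityMeasure (jsk m d x) := fun x => jsk_prob m d hm x
  have hJ : jitterMeasure m d = Measure.pi (jsk m d) := rfl
  unfold expStarDisc
  rw [hJ]
  have hiX : ∀ i, Integrable (jsX m d i) (Measure.pi (jsk m d)) := fun i =>
    js_integrable _ _ (jsX_meas m d i) _ (jsX_abs m d i)
  have hiw : ∀ x S, Integrable (fun P => jsw m d S P *
      jsg m d (anchoredBox d (jsy m d S)) x (P x)) (Measure.pi (jsk m d)) := fun x S => by
    refine js_integrable _ _ ((jsw_meas m d S).mul
      ((jsg_meas m d _ (js_box_meas d _) x).comp (measurable_pi_apply x))) 1 fun P => ?_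
    rw [abs_mul]
    have : |jsw m d S P| ≤ 1 := by unfold jsw; split_ifs <;> simp
    exact mul_le_one₀ this (abs_nonneg _) (jsg_abs hm _ _ _)
  have hiA : ∀ i, Integrable (fun P => (|jsX m d i P| + jsX m d i P) / 2)
      (Measure.pi (jsk m d)) := fun i => ((hiX i).abs.add (hiX i)).div_const 2
  have hi1 : Integrable (fun P => ∑ i, (|jsX m d i P| + jsX m d i P) / 2)
      (Measure.pi (jsk m d)) :=
    integrable_finsetSum _ fun i _ => hiA i
  have hi2 : Integrable (fun P => ∑ x ∈ (jsU m d)ᶜ, ∑ S, jsw m d S P *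
      jsg m d (anchoredBox d (jsy m d S)) x (P x)) (Measure.pi (jsk m d)) :=
    integrable_finsetSum _ fun x _ => integrable_finsetSum _ fun S _ => hiw x S
  have hae : ∀ᵐ P ∂(Measure.pi (jsk m d)), ∀ x, P x ∈ jitterCube m d x := by
    rw [ae_all_iff]
    intro x
    have h1 : ∀ᵐ p ∂(jsk m d x), p ∈ jitterCube m d x :=
      Measure.ae_smul_measure (ae_restrict_mem (js_cube_meas m d x)) _
    exact (Measure.quasiMeasurePreserving_eval (jsk m d) x).ae h1
  have hmono := integral_mono_ae (hi1.add hi2)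
    (js_integrable (Measure.pi (jsk m d)) _ (js_star_meas hm) _ (js_star_abs hm))
    (hae.mono fun P hP => js_pointwise hm P hP)
  refine le_trans ?_ hmono
  simp only [Pi.add_apply]
  rw [integral_add hi1 hi2]
  have hz : ∫ P, ∑ x ∈ (jsU m d)ᶜ, ∑ S, jsw m d S P *
      jsg m d (anchoredBox d (jsy m d S)) x (P x) ∂(Measure.pi (jsk m d)) = 0 := by
    rw [integral_finsetSum _ fun x _ => integrable_finsetSum _ fun S _ => hiw x S]
    refine Finset.sum_eq_zero fun x hx => ?_
    rw [integral_finsetSum _ fun S _ => hiw x S]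
    refine Finset.sum_eq_zero fun S _ => ?_
    exact js_indep_zero (jsk m d) x _ (jsw_meas m d S)
      (jsw_inv S (Finset.mem_compl.1 hx)) _ (jsg_meas m d _ (js_box_meas d _) x)
      (jsg_int hm _ (js_box_meas d _) x)
  rw [hz, add_zero, integral_finsetSum _ fun i _ => hiA i]
  have hE : ∀ i : Fin d, jsc0 / 2 * √(((m - 1 : ℕ) : ℝ) ^ (d - 1)) ≤
      ∫ P, (|jsX m d i P| + jsX m d i P) / 2 ∂(Measure.pi (jsk m d)) := fun i => by
    rw [integral_div, integral_add (hiX i).abs (hiX i)]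
    have h0 : ∫ P, jsX m d i P ∂(Measure.pi (jsk m d)) = 0 := by
      unfold jsX
      rw [integral_finsetSum]
      · refine Finset.sum_eq_zero fun x hx => ?_
        rw [integral_comp_eval (μ := jsk m d) (i := x) (f := jsv (jsH m d i))
          (jsv_meas (jsH_meas m d i)).aestronglyMeasurable]
        rw [jsv_comp_integral (jsk m d x) _ (jsH_meas m d i) (jsk_half hm i hx) (fun r => r)]
        norm_num
      · intro x _
        exact js_integrable _ _ ((jsv_meas (jsH_meas m d i)).comp (measurable_pi_apply x)) _
          fun P => jsv_abs _ _
    have hk := js_khin (jsk m d) (jsT m d i) (jsH m d i) (jsH_meas m d i)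
      (fun x hx => jsk_half hm i hx)
    rw [jsT_card hm i] at hk
    push_cast at hk
    rw [h0, add_zero]
    unfold jsX
    linarith
  refine le_trans (le_of_eq ?_) (Finset.sum_le_sum fun i _ => hE i)
  simp

/-- For all constants `Γ ≥ γ > 0` there is a constant `C' > 0` (depending only on `γ` and `Γ`)
such that for all integers `m, d ≥ 2` with `γ·d ≤ m ≤ Γ·d`, a jittered sampling point set of
`N = m^d` points in `[0,1)^d` satisfies `E[D*(P)] ≥ C'·√(d·N)`. -/
theorem jittered_sampling_lower_bound_bounded_ratio (γ Γ : ℝ) (hγ : 0 < γ) (hγΓ : γ ≤ Γ) :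
    ∃ C' : ℝ, 0 < C' ∧
      ∀ m d : ℕ, 2 ≤ m → 2 ≤ d → γ * d ≤ m → (m : ℝ) ≤ Γ * d →
        C' * Real.sqrt ((d : ℝ) * (m : ℝ) ^ d) ≤ expStarDisc m d := by
  have hΓ : 0 < Γ := hγ.trans_le hγΓ
  have hc := jsc0_pos
  refine ⟨jsc0 / 2 * √((1 / 4 : ℝ) ^ (1 / γ) / Γ), by positivity, ?_⟩
  intro m d hm hd h1 h2
  refine le_trans ?_ (js_exp (d := d) hm)
  have hm0 : (0 : ℝ) < m := by exact_mod_cast (by omega : 0 < m)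
  have hd0 : (0 : ℝ) < d := by exact_mod_cast (by omega : 0 < d)
  have hcast : ((m - 1 : ℕ) : ℝ) = m - 1 := by
    rw [Nat.cast_sub (by omega)]; simp
  obtain ⟨i1, i2, _⟩ := js_inv hm
  -- `(1 - 1/m) ≥ (1/4)^(1/m)`
  have hb : (1 / 4 : ℝ) ^ ((1 : ℝ) / m) ≤ 1 - 1 / m := by
    have hcv := (convexOn_rpow_left (b := (1 / 4 : ℝ)) (by norm_num)).2
      (Set.mem_univ (0 : ℝ)) (Set.mem_univ (1 / 2 : ℝ))
      (show (0 : ℝ) ≤ 1 - 2 * (1 / m) by linarith) (show (0 : ℝ) ≤ 2 * (1 / m) by linarith)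
      (by ring)
    have hh : (1 / 4 : ℝ) ^ (1 / 2 : ℝ) = 1 / 2 := by
      rw [← Real.sqrt_eq_rpow, show (1 / 4 : ℝ) = (1 / 2) ^ 2 by norm_num,
        Real.sqrt_sq (by norm_num)]
    simp only [smul_eq_mul, mul_zero, zero_add, Real.rpow_zero, hh] at hcv
    have e : (2 * (1 / (m : ℝ)) * (1 / 2)) = 1 / m := by ring
    rw [e] at hcv
    linarith
  have hpow : (1 / 4 : ℝ) ^ (1 / γ) ≤ (1 - 1 / m) ^ (d - 1) := by
    refine le_trans ?_ (pow_le_pow_left₀ (by positivity) hb (d - 1))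
    rw [← Real.rpow_natCast, ← Real.rpow_mul (by norm_num)]
    apply Real.rpow_le_rpow_of_exponent_ge (by norm_num) (by norm_num)
    have hd1 : ((d - 1 : ℕ) : ℝ) ≤ d := by exact_mod_cast Nat.sub_le d 1
    rw [div_mul_eq_mul_div, one_mul, div_le_div_iff₀ hm0 hγ]
    nlinarith
  have hkey : (1 / 4 : ℝ) ^ (1 / γ) / Γ * (d * (m : ℝ) ^ d) ≤
      (d : ℝ) ^ 2 * ((m - 1 : ℕ) : ℝ) ^ (d - 1) := by
    have e1 : ((m - 1 : ℕ) : ℝ) ^ (d - 1) = (m : ℝ) ^ (d - 1) * (1 - 1 / m) ^ (d - 1) := by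
      rw [← mul_pow, mul_sub, mul_one_div_cancel hm0.ne', mul_one, hcast]
    have e2 : (m : ℝ) ^ d = (m : ℝ) ^ (d - 1) * m := by
      rw [← pow_succ]; congr 1; omega
    rw [e1, e2, div_mul_eq_mul_div, div_le_iff₀ hΓ]
    have hq0 : (0 : ℝ) ≤ (1 - 1 / m) ^ (d - 1) := pow_nonneg (by linarith) _
    have hq : (0 : ℝ) ≤ (1 / 4 : ℝ) ^ (1 / γ) := by positivity
    calc (1 / 4 : ℝ) ^ (1 / γ) * (d * ((m : ℝ) ^ (d - 1) * m))
        ≤ (1 - 1 / m) ^ (d - 1) * (d * ((m : ℝ) ^ (d - 1) * (Γ * d))) := by gcongr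
      _ = _ := by ring
  have hs := Real.sqrt_le_sqrt hkey
  rw [Real.sqrt_mul (by positivity), Real.sqrt_mul (sq_nonneg (d : ℝ)), Real.sqrt_sq hd0.le] at hs
  calc jsc0 / 2 * √((1 / 4 : ℝ) ^ (1 / γ) / Γ) * √((d : ℝ) * (m : ℝ) ^ d)
      = jsc0 / 2 * (√((1 / 4 : ℝ) ^ (1 / γ) / Γ) * √((d : ℝ) * (m : ℝ) ^ d)) := by ring
    _ ≤ jsc0 / 2 * (d * √(((m - 1 : ℕ) : ℝ) ^ (d - 1))) := by gcongr
    _ = _ := by ring
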